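/- arXiv:math/0404411 — 2 statements merged into one kernel-verified Lean document; each statement's English description precedes it below -/
import Mathlib

section
/- (Dickson's theorem) The Dickson invariants d_{n,0}, …, d_{n,n-1} are algebraically independent over 𝔽_p, and the subalgebra of GL_n(𝔽_p)-invariants of S = MvPolynomial (Fin n) 𝔽_p equals the 𝔽_p-subalgebra generated by d_{n,0}, …, d_{n,n-1}; in other words, S^{GL_n(𝔽_p)} = 𝔽_p[d_{n,0}, …, d_{n,n-1}] is a polynomial algebra on the Dickson invariants. -/
open MvPolynomial

/-- `V p n k` : the set of `𝔽_p`-linear combinations of the first `k` variables. -/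
noncomputable def V (p n k : ℕ) [Fact p.Prime] : Finset (MvPolynomial (Fin n) (ZMod p)) :=
  (Finset.univ : Finset (Fin n → ZMod p)).image
    (fun c => ∑ j ∈ Finset.univ.filter (fun j : Fin n => j.val < k), C (c j) * X j)

/-- `f p n k = ∏_{u ∈ V_k} (X - C u)`. -/
noncomputable def f (p n k : ℕ) [Fact p.Prime] :
    Polynomial (MvPolynomial (Fin n) (ZMod p)) :=
  ∏ u ∈ V p n k, (Polynomial.X - Polynomial.C u)

/-- Dickson invariant `d_{k,i}`. -/
noncomputable def d (p n k i : ℕ) [Fact p.Prime] : MvPolynomial (Fin n) (ZMod p) :=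
  (-1) ^ (k - i) * (f p n k).coeff (p ^ i)

/-- Borel generator: `hGen p n j` is `h_{j+1}` of the paper. -/
noncomputable def hGen (p n : ℕ) [Fact p.Prime] (j : Fin n) : MvPolynomial (Fin n) (ZMod p) :=
  (Polynomial.eval (X j) (f p n j.val)) ^ (p - 1)

/-- Action of `GL_n(𝔽_p)` on `S` by linear substitution `g · y_j = ∑_i g_{ij} y_i`. -/
noncomputable def gact (p n : ℕ) [Fact p.Prime] (g : GL (Fin n) (ZMod p)) :
    MvPolynomial (Fin n) (ZMod p) →ₐ[ZMod p] MvPolynomial (Fin n) (ZMod p) :=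
  aeval (fun j : Fin n => ∑ i : Fin n, C ((g : Matrix (Fin n) (Fin n) (ZMod p)) i j) * X i)

/-!
Let `q = |K|` and let `P` be the product of `X - u` over all linear forms `u` in `n` variables.
Adjoining the variables one at a time shows that only the powers `X ^ q ^ i` occur in `P`, so all
coefficients of `P` lie in the algebra `A` generated by the Dickson invariants. The variables are
roots of the monic polynomial `P`, hence the polynomial ring `S` is integral over `A`, and comparing
transcendence degrees makes the `n` generators of `A` algebraically independent; in particular `A`
is integrally closed. Moreover `Frac S` is a splitting field of the separable polynomial `P` over
`Frac A`, and every element of the Galois group permutes the roots of `P`, so it acts on the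
variables through `GL n K`. A `GL n K`-invariant polynomial is therefore an element of `Frac A`
that is integral over `A`, so it lies in `A`.
-/

section LinearAlgebra

variable {ι κ R V : Type*} [Fintype ι] [Fintype κ] [AddCommMonoid V]

lemma linearCombination_sum_smul [CommSemiring R] [Module R V] (M : Matrix ι κ R) (y : ι → V)
    (c : κ → R) :
    Fintype.linearCombination R (fun j => ∑ i, M i j • y i) c =
      Fintype.linearCombination R y (M.mulVec c) := by
  simp only [Fintype.linearCombination_apply, Matrix.mulVec, dotProduct, Finset.sum_smul,
    Finset.smul_sum, smul_smul]
  rw [Finset.sum_comm]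
  simp only [mul_comm]

lemma exists_generalLinearGroup_sum_smul_eq {K : Type*} [DecidableEq ι] [Field K] [Module K V]
    {y z : ι → V} (hz : LinearIndependent K z)
    (hzy : ∀ j, z j ∈ Submodule.span K (Set.range y)) :
    ∃ g : GL ι K, ∀ j, z j = ∑ i, (g : Matrix ι ι K) i j • y i := by
  choose c hc using fun j => (Submodule.mem_span_range_iff_exists_fun K).mp (hzy j)
  let M : Matrix ι ι K := .of fun i j => c j i
  have hM : (fun j => ∑ i, M i j • y i) = z := funext hc
  have hinj : Function.Injective M.mulVec := by
    refine Function.Injective.of_comp (f := Fintype.linearCombination K y) ?_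
    have hcomp : Fintype.linearCombination K y ∘ M.mulVec = Fintype.linearCombination K z :=
      funext fun v => by rw [Function.comp_apply, ← linearCombination_sum_smul, hM]
    exact hcomp ▸ hz.fintypeLinearCombination_injective
  obtain ⟨g, hg⟩ := Matrix.mulVec_injective_iff_isUnit.mp hinj
  exact ⟨g, fun j => by rw [hg, ← congrFun hM j]⟩

end LinearAlgebra

section LinearizedPolynomials

open scoped Polynomial

/-- The `q`-linearized polynomials over `R`, i.e. the `R`-linear combinations of the monomials
`X ^ q ^ i`. -/
noncomputable def linearizedPolynomials (q : ℕ) (R : Type*) [Semiring R] : Submodule R R[X] :=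
  Submodule.span R (Set.range fun i : ℕ => (Polynomial.X : R[X]) ^ q ^ i)

lemma coeff_eq_zero_of_mem_linearizedPolynomials {q : ℕ} {R : Type*} [Semiring R] {P : R[X]}
    (hP : P ∈ linearizedPolynomials q R) {m : ℕ} (hm : ∀ i, m ≠ q ^ i) : P.coeff m = 0 := by
  induction hP using Submodule.span_induction with
  | mem P hP =>
    obtain ⟨i, rfl⟩ := hP
    rw [Polynomial.coeff_X_pow, if_neg (hm i)]
  | zero => exact Polynomial.coeff_zero m
  | add P Q _ _ hP hQ => rw [Polynomial.coeff_add, hP, hQ, add_zero]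
  | smul a P _ hP => rw [Polynomial.coeff_smul, hP, smul_zero]

variable {K R : Type*} [Field K] [Fintype K] [CommRing R] [Algebra K R] {P : R[X]}

lemma pow_card_mem_linearizedPolynomials (hP : P ∈ linearizedPolynomials (Fintype.card K) R) :
    P ^ Fintype.card K ∈ linearizedPolynomials (Fintype.card K) R := by
  rw [← FiniteField.frobeniusAlgHom_apply K]
  induction hP using Submodule.span_induction with
  | mem P hP =>
    obtain ⟨i, rfl⟩ := hP
    exact Submodule.subset_span
      ⟨i + 1, by simp only [FiniteField.frobeniusAlgHom_apply, ← pow_mul, pow_succ]⟩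
  | zero => simp only [map_zero, zero_mem]
  | add P Q _ _ hP hQ => simpa only [map_add] using add_mem hP hQ
  | smul a P _ hP =>
    rw [FiniteField.frobeniusAlgHom_apply] at hP ⊢
    simpa only [smul_pow] using Submodule.smul_mem _ _ hP

lemma exists_linearMap_eq_aeval_of_mem_linearizedPolynomials
    (hP : P ∈ linearizedPolynomials (Fintype.card K) R)
    (B : Type*) [CommRing B] [Algebra R B] [Algebra K B] [IsScalarTower K R B] :
    ∃ φ : B →ₗ[K] B, ∀ b, φ b = Polynomial.aeval b P := by
  induction hP using Submodule.span_induction with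
  | mem P hP =>
    obtain ⟨i, rfl⟩ := hP
    refine ⟨(FiniteField.frobeniusAlgHom K B ^ i).toLinearMap, fun b => ?_⟩
    simp [FiniteField.coe_frobeniusAlgHom, pow_iterate]
  | zero => exact ⟨0, fun b => by simp only [LinearMap.zero_apply, map_zero]⟩
  | add P Q _ _ hP hQ =>
    obtain ⟨⟨φ, hφ⟩, ψ, hψ⟩ := hP, hQ
    exact ⟨φ + ψ, fun b => by rw [LinearMap.add_apply, hφ, hψ, map_add]⟩
  | smul a P _ hP =>
    obtain ⟨φ, hφ⟩ := hP
    exact ⟨a • φ, fun b => by rw [LinearMap.smul_apply, hφ, map_smul]⟩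

lemma comp_X_sub_C_smul_of_mem_linearizedPolynomials
    (hP : P ∈ linearizedPolynomials (Fintype.card K) R) (c : K) (z : R) :
    P.comp (Polynomial.X - Polynomial.C (c • z)) = P - c • Polynomial.C (P.eval z) := by
  obtain ⟨φ, hφ⟩ := exists_linearMap_eq_aeval_of_mem_linearizedPolynomials hP R[X]
  calc P.comp (Polynomial.X - Polynomial.C (c • z))
      = φ (Polynomial.X - c • Polynomial.C z) := by
        rw [hφ, Polynomial.smul_C, Polynomial.comp_eq_aeval]
    _ = P - c • Polynomial.C (P.eval z) := by
        rw [map_sub, map_smul, hφ, hφ, Polynomial.aeval_X_left_apply,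
          ← Polynomial.algebraMap_eq, Polynomial.aeval_algebraMap_apply,
          Polynomial.coe_aeval_eq_eval]

lemma prod_X_sub_C_eq_X_pow_card_sub_X (K : Type*) [Field K] [Fintype K] :
    ∏ c : K, (Polynomial.X - Polynomial.C c) = Polynomial.X ^ Fintype.card K - Polynomial.X := by
  have hmonic : (Polynomial.X ^ Fintype.card K - Polynomial.X : K[X]).Monic :=
    Polynomial.monic_X_pow_sub (by
      rw [Polynomial.degree_X]; exact_mod_cast Fintype.one_lt_card)
  have hroots := FiniteField.roots_X_pow_card_sub_X K
  have hdeg := FiniteField.X_pow_card_sub_X_natDegree_eq K (Fintype.one_lt_card (α := K))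
  have hprod := Polynomial.prod_multiset_X_sub_C_of_monic_of_roots_card_eq hmonic
    (by rw [hroots, hdeg]; rfl)
  rwa [hroots] at hprod

lemma prod_sub_smul_eq_pow_card_sub (T z : R) :
    ∏ c : K, (T - c • z) = T ^ Fintype.card K - z ^ (Fintype.card K - 1) * T := by
  have hq : Fintype.card K ≠ 0 := Fintype.card_ne_zero
  have hom := Polynomial.homogenize_finsetProd (s := Finset.univ) (n := fun _ : K => 1)
    (p := fun c => Polynomial.X - Polynomial.C c) fun c _ => Polynomial.natDegree_X_sub_C_le c
  rw [prod_X_sub_C_eq_X_pow_card_sub_X, Finset.sum_const, Finset.card_univ, smul_eq_mul, mul_one]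
    at hom
  simpa [hq, Algebra.smul_def, mul_comm] using (congrArg (aeval ![T, z]) hom).symm

end LinearizedPolynomials

section SpanPolynomial

open scoped Polynomial

variable {ι κ K R : Type*} [Fintype ι] [DecidableEq ι] [Fintype κ] [DecidableEq κ]
  [Field K] [Fintype K] [CommRing R] [Algebra K R]

variable (K) in
/-- The product of `X - u` over the `K`-linear combinations `u` of the family `y`. The factors are
indexed by the coefficient vectors, so `u` is repeated when `y` is linearly dependent; this makes
the construction commute with all algebra homomorphisms. -/
noncomputable def spanPolynomial (y : ι → R) : R[X] :=
  ∏ c : ι → K, (Polynomial.X - Polynomial.C (Fintype.linearCombination K y c))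

lemma monic_spanPolynomial (y : ι → R) : (spanPolynomial K y).Monic :=
  Polynomial.monic_prod_X_sub_C _ _

lemma natDegree_spanPolynomial [Nontrivial R] (y : ι → R) :
    (spanPolynomial K y).natDegree = Fintype.card K ^ Fintype.card ι := by
  rw [spanPolynomial, Polynomial.natDegree_finsetProd_X_sub_C_eq_card, Finset.card_univ,
    Fintype.card_fun]

lemma map_spanPolynomial {T : Type*} [CommRing T] [Algebra K T] (φ : R →ₐ[K] T) (y : ι → R) :
    (spanPolynomial K y).map (φ : R →+* T) = spanPolynomial K (φ ∘ y) := by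
  rw [spanPolynomial, spanPolynomial, Polynomial.map_prod]
  refine Finset.prod_congr rfl fun c _ => ?_
  rw [Polynomial.map_sub, Polynomial.map_X, Polynomial.map_C]
  simp only [Fintype.linearCombination_apply, RingHom.coe_coe, map_sum, map_smul,
    Function.comp_apply]

lemma spanPolynomial_comp_equiv (e : κ ≃ ι) (y : ι → R) :
    spanPolynomial K (y ∘ e) = spanPolynomial K y := by
  refine Fintype.prod_equiv (e.arrowCongr (Equiv.refl K)) _ _ fun c => ?_
  simp [Fintype.linearCombination_apply, ← e.sum_comp]

lemma spanPolynomial_sum_smul (g : GL ι K) (y : ι → R) :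
    spanPolynomial K (fun j => ∑ i, (g : Matrix ι ι K) i j • y i) = spanPolynomial K y := by
  have hbij : Function.Bijective (g : Matrix ι ι K).mulVec :=
    Finite.injective_iff_bijective.mp (Matrix.mulVec_injective_iff_isUnit.mpr g.isUnit)
  exact Fintype.prod_bijective _ hbij _ _ fun c => by rw [linearCombination_sum_smul]

lemma eval_spanPolynomial_of_mem_span {y : ι → R} {z : R}
    (hz : z ∈ Submodule.span K (Set.range y)) : (spanPolynomial K y).eval z = 0 := by
  rw [← Fintype.range_linearCombination] at hz
  obtain ⟨c, rfl⟩ := hz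
  rw [spanPolynomial, Polynomial.eval_prod]
  exact Finset.prod_eq_zero (Finset.mem_univ c) (by simp)

lemma eval_spanPolynomial_eq_zero_iff [IsDomain R] {y : ι → R} {z : R} :
    (spanPolynomial K y).eval z = 0 ↔ z ∈ Submodule.span K (Set.range y) := by
  refine ⟨fun h => ?_, eval_spanPolynomial_of_mem_span⟩
  rw [spanPolynomial, Polynomial.eval_prod, Finset.prod_eq_zero_iff] at h
  obtain ⟨c, -, hc⟩ := h
  rw [Polynomial.eval_sub, Polynomial.eval_X, Polynomial.eval_C, sub_eq_zero] at hc
  rw [← Fintype.range_linearCombination, hc]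
  exact LinearMap.mem_range_self _ c

lemma spanPolynomial_fin_succ {n : ℕ} (y : Fin (n + 1) → R)
    (h : spanPolynomial K (Fin.tail y) ∈ linearizedPolynomials (Fintype.card K) R) :
    spanPolynomial K y = spanPolynomial K (Fin.tail y) ^ Fintype.card K -
      Polynomial.C ((spanPolynomial K (Fin.tail y)).eval (y 0)) ^ (Fintype.card K - 1) *
        spanPolynomial K (Fin.tail y) := by
  rw [← prod_sub_smul_eq_pow_card_sub, spanPolynomial,
    ← (Fin.consEquiv fun _ => K).prod_comp, Fintype.prod_prod_type]
  refine Finset.prod_congr rfl fun c₀ _ => ?_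
  rw [← comp_X_sub_C_smul_of_mem_linearizedPolynomials h, spanPolynomial, Polynomial.prod_comp]
  refine Finset.prod_congr rfl fun c _ => ?_
  simp [Fintype.linearCombination_apply, Fin.sum_univ_succ, Fin.tail, sub_sub]

theorem spanPolynomial_mem_linearizedPolynomials (y : ι → R) :
    spanPolynomial K y ∈ linearizedPolynomials (Fintype.card K) R := by
  rw [← spanPolynomial_comp_equiv (Fintype.equivFin ι).symm]
  generalize y ∘ (Fintype.equivFin ι).symm = y
  generalize Fintype.card ι = n at y
  induction n with
  | zero =>
    exact Submodule.subset_span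
      ⟨0, by simp [spanPolynomial, Fintype.linearCombination_apply]⟩
  | succ n ih =>
    rw [spanPolynomial_fin_succ y (ih _), ← map_pow, ← Polynomial.smul_eq_C_mul]
    exact sub_mem (pow_card_mem_linearizedPolynomials (ih _)) (Submodule.smul_mem _ _ (ih _))

lemma separable_spanPolynomial {L : Type*} [Field L] [Algebra K L] {y : ι → L}
    (hy : LinearIndependent K y) : (spanPolynomial K y).Separable :=
  Polynomial.separable_prod_X_sub_C_iff.mpr hy.fintypeLinearCombination_injective

lemma isIntegral_of_spanPolynomial_mem_lifts {A : Type*} [CommRing A] [Algebra A R] {y : ι → R}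
    (hlift : spanPolynomial K y ∈ Polynomial.lifts (algebraMap A R)) (j : ι) :
    IsIntegral A (y j) := by
  obtain ⟨P, hP, -, hmonic⟩ :=
    Polynomial.lifts_and_natDegree_eq_and_monic hlift (monic_spanPolynomial y)
  refine ⟨P, hmonic, ?_⟩
  rw [← Polynomial.eval_map, hP]
  exact eval_spanPolynomial_of_mem_span (Submodule.subset_span ⟨j, rfl⟩)

end SpanPolynomial

section GaloisGroup

open scoped Polynomial

variable {ι K F L : Type*} [Fintype ι] [DecidableEq ι] [Field K] [Fintype K] [Field F] [Field L]
  [Algebra K L] [Algebra F L] {y : ι → L}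

theorem isGalois_of_spanPolynomial_mem_lifts (hy : LinearIndependent K y)
    (hlift : spanPolynomial K y ∈ Polynomial.lifts (algebraMap F L))
    (htop : IntermediateField.adjoin F (Set.range y) = ⊤) : IsGalois F L := by
  obtain ⟨P, hP⟩ := (Polynomial.mem_lifts _).mp hlift
  have hroot : ∀ j, y j ∈ P.rootSet L := fun j => by
    rw [Polynomial.mem_rootSet', hP, Polynomial.aeval_def, ← Polynomial.eval_map, hP]
    exact ⟨(monic_spanPolynomial y).ne_zero,
      eval_spanPolynomial_of_mem_span (Submodule.subset_span ⟨j, rfl⟩)⟩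
  have hsplitting : P.IsSplittingField F L := by
    rw [isSplittingField_iff_intermediateField, hP, eq_top_iff, ← htop]
    exact ⟨Polynomial.Splits.prod fun _ _ => Polynomial.Splits.X_sub_C _,
      IntermediateField.adjoin.mono F _ _ (Set.range_subset_iff.mpr hroot)⟩
  have hseparable : P.Separable := by
    rw [← Polynomial.separable_map (algebraMap F L), hP]
    exact separable_spanPolynomial hy
  exact IsGalois.of_separable_splitting_field hseparable

theorem exists_generalLinearGroup_algEquiv_apply_eq [Algebra K F] [IsScalarTower K F L]
    (hy : LinearIndependent K y) (hlift : spanPolynomial K y ∈ Polynomial.lifts (algebraMap F L))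
    (σ : L ≃ₐ[F] L) : ∃ g : GL ι K, ∀ j, σ (y j) = ∑ i, (g : Matrix ι ι K) i j • y i := by
  obtain ⟨P, hP⟩ := (Polynomial.mem_lifts _).mp hlift
  have hz : LinearIndependent K fun j => σ (y j) :=
    hy.map' (σ.toLinearEquiv.restrictScalars K).toLinearMap (LinearEquiv.ker _)
  refine exists_generalLinearGroup_sum_smul_eq hz fun j => ?_
  have hyj : Polynomial.aeval (y j) P = 0 := by
    rw [Polynomial.aeval_def, ← Polynomial.eval_map, hP]
    exact eval_spanPolynomial_of_mem_span (Submodule.subset_span ⟨j, rfl⟩)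
  rw [← eval_spanPolynomial_eq_zero_iff, ← hP, Polynomial.eval_map, ← Polynomial.aeval_def,
    Polynomial.aeval_algHom_apply σ, hyj, map_zero]

lemma mem_range_algebraMap_of_forall_algEquiv_eq {A S : Type*} [CommRing A] [CommRing S]
    [IsIntegrallyClosed A] [Algebra A S] [Algebra A F] [IsFractionRing A F] [Algebra S L]
    [FaithfulSMul S L] [Algebra A L] [IsScalarTower A S L] [IsScalarTower A F L] [IsGalois F L]
    {x : S} (hint : IsIntegral A x)
    (hfix : ∀ σ : L ≃ₐ[F] L, σ (algebraMap S L x) = algebraMap S L x) :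
    x ∈ (algebraMap A S).range := by
  obtain ⟨y, hy⟩ := (InfiniteGalois.mem_range_algebraMap_iff_fixed _).mpr hfix
  have hy_int : IsIntegral A y := by
    rw [← isIntegral_algebraMap_iff (algebraMap F L).injective, hy]
    exact hint.algebraMap
  obtain ⟨a, rfl⟩ := IsIntegrallyClosed.algebraMap_eq_of_integral hy_int
  refine ⟨a, FaithfulSMul.algebraMap_injective S L ?_⟩
  rw [← hy, ← IsScalarTower.algebraMap_apply, ← IsScalarTower.algebraMap_apply]

end GaloisGroup

section Invariants

/-- The substitution `X j ↦ ∑ i, g i j * X i`, by which matrices act on polynomial rings. -/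
noncomputable def linearSubst {ι κ K : Type*} [Fintype ι] [CommSemiring K] (g : Matrix ι κ K) :
    MvPolynomial κ K →ₐ[K] MvPolynomial ι K :=
  aeval fun j => ∑ i, C (g i j) * X i

lemma linearSubst_X {ι κ K : Type*} [Fintype ι] [CommSemiring K] (g : Matrix ι κ K) (j : κ) :
    linearSubst g (X j) = ∑ i, g i j • X i := by
  simp only [linearSubst, aeval_X, smul_eq_C_mul]

variable {ι K A : Type*} [Fintype ι] [DecidableEq ι] [Field K] [Fintype K] [CommRing A]
  [Algebra K A] [Algebra A (MvPolynomial ι K)] [IsScalarTower K A (MvPolynomial ι K)]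

lemma map_linearSubst_spanPolynomial_X (g : GL ι K) :
    (spanPolynomial K X).map
        (linearSubst (g : Matrix ι ι K) : MvPolynomial ι K →+* MvPolynomial ι K) =
      spanPolynomial K X := by
  calc _ = spanPolynomial K (linearSubst (g : Matrix ι ι K) ∘ X) := map_spanPolynomial _ X
    _ = spanPolynomial K (fun j => ∑ i, (g : Matrix ι ι K) i j • (X i : MvPolynomial ι K)) :=
      congrArg _ (funext (linearSubst_X _))
    _ = spanPolynomial K X := spanPolynomial_sum_smul g X

lemma isIntegral_mvPolynomial_of_spanPolynomial_X_mem_lifts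
    (hlift : spanPolynomial K X ∈ Polynomial.lifts (algebraMap A (MvPolynomial ι K))) :
    Algebra.IsIntegral A (MvPolynomial ι K) where
  isIntegral x := by
    induction x using MvPolynomial.induction_on with
    | C a =>
      rw [← algebraMap_eq, IsScalarTower.algebraMap_apply K A]
      exact isIntegral_algebraMap
    | add x y hx hy => exact hx.add hy
    | mul_X x j hx => exact hx.mul (isIntegral_of_spanPolynomial_mem_lifts hlift j)

lemma adjoin_range_algebraMap_X_eq_top {ι K F L : Type*} [Field K] [Field F] [Field L]
    [Algebra K F] [Algebra K L] [Algebra F L] [IsScalarTower K F L] [Algebra (MvPolynomial ι K) L]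
    [IsScalarTower K (MvPolynomial ι K) L] [IsFractionRing (MvPolynomial ι K) L] :
    IntermediateField.adjoin F
      (Set.range fun j : ι => algebraMap (MvPolynomial ι K) L (X j)) = ⊤ := by
  set E := IntermediateField.adjoin F (Set.range fun j : ι => algebraMap (MvPolynomial ι K) L (X j))
  have hpoly : ∀ x : MvPolynomial ι K, algebraMap _ L x ∈ E := fun x => by
    induction x using MvPolynomial.induction_on with
    | C a =>
      rw [← algebraMap_eq, ← IsScalarTower.algebraMap_apply K, IsScalarTower.algebraMap_apply K F]
      exact E.algebraMap_mem _
    | add x y hx hy => rw [map_add]; exact add_mem hx hy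
    | mul_X x j hx =>
      rw [map_mul]
      exact mul_mem hx (IntermediateField.subset_adjoin _ _ ⟨j, rfl⟩)
  refine eq_top_iff.mpr fun z _ => ?_
  obtain ⟨a, b, _, rfl⟩ := IsFractionRing.div_surjective (A := MvPolynomial ι K) z
  exact div_mem (hpoly a) (hpoly b)

theorem mem_range_algebraMap_of_forall_linearSubst_eq [IsIntegrallyClosed A]
    [FaithfulSMul A (MvPolynomial ι K)]
    (hlift : spanPolynomial K X ∈ Polynomial.lifts (algebraMap A (MvPolynomial ι K)))
    {x : MvPolynomial ι K} (hx : ∀ g : GL ι K, linearSubst (g : Matrix ι ι K) x = x) :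
    x ∈ (algebraMap A (MvPolynomial ι K)).range := by
  have := IsDomain.of_faithfulSMul A (MvPolynomial ι K)
  let F := FractionRing A
  let L := FractionRing (MvPolynomial ι K)
  let φ : MvPolynomial ι K →ₐ[K] L := IsScalarTower.toAlgHom K _ L
  let : Algebra F L := FractionRing.liftAlgebra A L
  have hy : LinearIndependent K (φ ∘ X) :=
    (linearIndependent_X ι K).map' φ.toLinearMap
      (LinearMap.ker_eq_bot.mpr (IsFractionRing.injective _ L))
  have hliftL : spanPolynomial K (φ ∘ X) ∈ Polynomial.lifts (algebraMap F L) := by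
    obtain ⟨P, hP⟩ := (Polynomial.mem_lifts _).mp hlift
    refine (Polynomial.mem_lifts _).mpr ⟨P.map (algebraMap A F), ?_⟩
    rw [← map_spanPolynomial, ← hP, Polynomial.map_map, Polynomial.map_map,
      ← IsScalarTower.algebraMap_eq]
    exact congrArg P.map (IsScalarTower.algebraMap_eq A (MvPolynomial ι K) L)
  have : IsGalois F L :=
    isGalois_of_spanPolynomial_mem_lifts hy hliftL adjoin_range_algebraMap_X_eq_top
  have := isIntegral_mvPolynomial_of_spanPolynomial_X_mem_lifts hlift
  refine mem_range_algebraMap_of_forall_algEquiv_eq (F := F) (L := L)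
    (Algebra.IsIntegral.isIntegral x) fun σ => ?_
  obtain ⟨g, hg⟩ := exists_generalLinearGroup_algEquiv_apply_eq hy hliftL σ
  have hσ : (σ.restrictScalars K).toAlgHom.comp φ = φ.comp (linearSubst g) :=
    algHom_ext fun j => (hg j).trans (by simp [linearSubst_X])
  calc σ (φ x) = φ (linearSubst g x) := DFunLike.congr_fun hσ x
    _ = φ x := by rw [hx g]

end Invariants

section DicksonAlgebra

variable (K : Type*) [Field K] [Fintype K] (n : ℕ)

/-- The Dickson invariant `d_{n,i}` over the finite field `K`: up to sign, the coefficient of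
`X ^ q ^ i` in the product of `X - u` over all linear forms `u` in `n` variables, `q = |K|`. -/
noncomputable def dicksonInvariant (i : ℕ) : MvPolynomial (Fin n) K :=
  (-1) ^ (n - i) * (spanPolynomial K X).coeff (Fintype.card K ^ i)

/-- The subalgebra generated by the Dickson invariants `d_{n,0}, …, d_{n,n-1}`. -/
noncomputable def dicksonAlgebra : Subalgebra K (MvPolynomial (Fin n) K) :=
  Algebra.adjoin K (Set.range fun i : Fin n => dicksonInvariant K n i)

variable {K n}

lemma linearSubst_dicksonInvariant (g : GL (Fin n) K) (i : ℕ) :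
    linearSubst (g : Matrix (Fin n) (Fin n) K) (dicksonInvariant K n i) =
      dicksonInvariant K n i := by
  have hcoeff : linearSubst (g : Matrix (Fin n) (Fin n) K)
      ((spanPolynomial K X).coeff (Fintype.card K ^ i)) =
        (spanPolynomial K X).coeff (Fintype.card K ^ i) := by
    conv_rhs => rw [← map_linearSubst_spanPolynomial_X g, Polynomial.coeff_map, RingHom.coe_coe]
  rw [dicksonInvariant, map_mul, map_pow, map_neg, map_one, hcoeff]

lemma linearSubst_eq_of_mem_dicksonAlgebra (g : GL (Fin n) K) {x : MvPolynomial (Fin n) K}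
    (hx : x ∈ dicksonAlgebra K n) : linearSubst (g : Matrix (Fin n) (Fin n) K) x = x :=
  AlgHom.adjoin_le_equalizer _ (AlgHom.id K _)
    (Set.eqOn_range.mpr (funext fun i : Fin n => linearSubst_dicksonInvariant g i)) hx

lemma coeff_spanPolynomial_X_mem_dicksonAlgebra (m : ℕ) :
    (spanPolynomial K X).coeff m ∈ dicksonAlgebra K n := by
  have hmonic := monic_spanPolynomial (K := K) (X : Fin n → MvPolynomial (Fin n) K)
  have hdeg := natDegree_spanPolynomial (K := K) (X : Fin n → MvPolynomial (Fin n) K)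
  rw [Fintype.card_fin] at hdeg
  by_cases hm : ∃ i, m = Fintype.card K ^ i
  · obtain ⟨i, rfl⟩ := hm
    rcases lt_trichotomy i n with hi | rfl | hi
    · have hcoeff : (spanPolynomial K X).coeff (Fintype.card K ^ i) =
          (-1) ^ (n - i) * dicksonInvariant K n i := by
        rw [dicksonInvariant, ← mul_assoc, ← mul_pow, neg_one_mul, neg_neg, one_pow, one_mul]
      rw [hcoeff]
      exact mul_mem (pow_mem (neg_mem (one_mem _)) _) (Algebra.subset_adjoin ⟨⟨i, hi⟩, rfl⟩)
    · rw [← hdeg, hmonic.coeff_natDegree]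
      exact one_mem _
    · rw [Polynomial.coeff_eq_zero_of_natDegree_lt
        (hdeg ▸ Nat.pow_lt_pow_right Fintype.one_lt_card hi)]
      exact zero_mem _
  · rw [coeff_eq_zero_of_mem_linearizedPolynomials (spanPolynomial_mem_linearizedPolynomials _)
      (not_exists.mp hm)]
    exact zero_mem _

lemma spanPolynomial_X_mem_lifts_dicksonAlgebra :
    spanPolynomial K X ∈
      Polynomial.lifts (algebraMap (dicksonAlgebra K n) (MvPolynomial (Fin n) K)) :=
  (Polynomial.lifts_iff_coeff_lifts _).mpr fun m =>
    ⟨⟨_, coeff_spanPolynomial_X_mem_dicksonAlgebra m⟩, rfl⟩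

theorem algebraicIndependent_dicksonInvariant :
    AlgebraicIndependent K fun i : Fin n => dicksonInvariant K n i := by
  have : Algebra.IsIntegral (dicksonAlgebra K n) (MvPolynomial (Fin n) K) :=
    isIntegral_mvPolynomial_of_spanPolynomial_X_mem_lifts spanPolynomial_X_mem_lifts_dicksonAlgebra
  have : Algebra.IsAlgebraic
      (Algebra.adjoin K (Set.range fun i : Fin n => dicksonInvariant K n i))
      (MvPolynomial (Fin n) K) :=
    inferInstanceAs (Algebra.IsAlgebraic (dicksonAlgebra K n) _)
  refine (Algebra.IsAlgebraic.isTranscendenceBasis_of_lift_le_trdeg_of_finite K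
    (fun i : Fin n => dicksonInvariant K n i) ?_).1
  simp [MvPolynomial.trdeg_of_isDomain]

lemma isIntegrallyClosed_dicksonAlgebra : IsIntegrallyClosed (dicksonAlgebra K n) :=
  .of_equiv algebraicIndependent_dicksonInvariant.aevalEquiv.toRingEquiv

theorem forall_linearSubst_eq_iff_mem_dicksonAlgebra {x : MvPolynomial (Fin n) K} :
    (∀ g : GL (Fin n) K, linearSubst (g : Matrix (Fin n) (Fin n) K) x = x) ↔
      x ∈ dicksonAlgebra K n := by
  refine ⟨fun hx => ?_, fun hx g => linearSubst_eq_of_mem_dicksonAlgebra g hx⟩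
  have := isIntegrallyClosed_dicksonAlgebra (K := K) (n := n)
  obtain ⟨a, rfl⟩ := mem_range_algebraMap_of_forall_linearSubst_eq
    spanPolynomial_X_mem_lifts_dicksonAlgebra hx
  exact a.2

end DicksonAlgebra

theorem stmt4_general (K : Type*) [Field K] [Fintype K] (n : ℕ) :
    AlgebraicIndependent K (fun i : Fin n => dicksonInvariant K n i) ∧
    ∀ x : MvPolynomial (Fin n) K,
      (∀ g : GL (Fin n) K, linearSubst (g : Matrix (Fin n) (Fin n) K) x = x) ↔
        x ∈ Algebra.adjoin K (Set.range fun i : Fin n => dicksonInvariant K n i) :=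
  ⟨algebraicIndependent_dicksonInvariant, fun _ => forall_linearSubst_eq_iff_mem_dicksonAlgebra⟩

lemma f_eq_spanPolynomial (p n : ℕ) [Fact p.Prime] : f p n n = spanPolynomial (ZMod p) X := by
  have hV : V p n n = Finset.univ.image (Fintype.linearCombination (ZMod p) X) := by
    refine Finset.image_congr fun c _ => ?_
    simp [Fintype.linearCombination_apply, smul_eq_C_mul]
  rw [f, hV, spanPolynomial, Finset.prod_image]
  exact (linearIndependent_X _ _).fintypeLinearCombination_injective.injOn

lemma d_eq_dicksonInvariant (p n i : ℕ) [Fact p.Prime] :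
    d p n n i = dicksonInvariant (ZMod p) n i := by
  rw [d, dicksonInvariant, f_eq_spanPolynomial, ZMod.card]

/-- Dickson's theorem: the Dickson invariants are algebraically independent and
generate the algebra of `GL_n(𝔽_p)`-invariants. -/
theorem stmt4 (p n : ℕ) [Fact p.Prime] :
    AlgebraicIndependent (ZMod p) (fun i : Fin n => d p n n i.val) ∧
    ∀ x : MvPolynomial (Fin n) (ZMod p),
      (∀ g : GL (Fin n) (ZMod p), gact p n g x = x) ↔
        x ∈ Algebra.adjoin (ZMod p) (Set.range (fun i : Fin n => d p n n i.val)) := by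
  simp only [d_eq_dicksonInvariant]
  exact stmt4_general (ZMod p) n
end

section
/- Let 0 ≤ s < k, 0 ≤ q < t, and k + t ≤ n. Suppose P, Q ∈ MvPolynomial (Fin n) 𝔽_p satisfy aeval(h) P = d_{k+q,k} · d_{k+t,s} and aeval(h) Q = d_{k+q,s} · d_{k+t,k}, where aeval(h) substitutes h_1, …, h_n for the n variables. Then: (i) the support of P is contained in the support of Q (every monomial of d_{k+q,k} · d_{k+t,s}, written in the h's, is also a monomial of d_{k+q,s} · d_{k+t,k}); and (ii) no exponent vector in the support of Q - P has all of its coordinates at the positions corresponding to h_{k+q+1}, …, h_{k+t} nonzero, i.e. no monomial of Q - P is divisible by the product of the variables sent to h_{k+q+1} ⋯ h_{k+t}. -/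
open MvPolynomial

/-!
For `w ∈ V_m` and `c ∈ 𝔽_p` one has `f_m(w + c y_{m+1}) = c f_m(y_{m+1})`, so the monic polynomial
`f_m ^ p - h_{m+1} f_m` vanishes on `V_{m+1}` and is equal to `f_{m+1}`. Taking coefficients, the
Dickson invariants are polynomials in the `h`'s obeying
`d_{m+1,i} = d_{m,i-1} ^ p + h_{m+1} d_{m,i}`. Since `f_m(x)` is a root of the monic polynomial
`T ^ p - h_{m+1} T - f_{m+1}(x)`, every `y_j` is integral over `𝔽_p[h_1, …, h_n]`, so the `h`'s are
algebraically independent. As `d_{m,i}` does not involve `h_{m+1}`, the terms obtained by expanding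
a product in powers of the last variable cannot cancel each other, and both claims follow by
induction on the last variable. For the inclusion of supports the induction treats
`d_{a,k} d_{b,s-r} ^ (p ^ r)` and `d_{a,s} d_{b,k-r} ^ (p ^ r)` for all `r` simultaneously.
-/

section SubspacePolynomial

theorem eq_nodal_of_monic {A : Type*} [CommRing A] [IsDomain A] {s : Finset A}
    {g : Polynomial A} (hg : g.Monic) (hdeg : g.natDegree = s.card) (hroots : ∀ x ∈ s, g.IsRoot x) :
    g = Lagrange.nodal s id := by
  have hdeg' : g.degree = s.card := by rw [Polynomial.degree_eq_natDegree hg.ne_zero, hdeg]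
  refine Polynomial.eq_of_degree_sub_lt_of_eval_finset_eq s ?_ fun x hx => ?_
  · rw [← hdeg']
    refine Polynomial.degree_sub_lt_left ?_ hg.ne_zero ?_
    · rw [hdeg', Lagrange.degree_nodal]
    · rw [hg.leadingCoeff, Lagrange.nodal_monic.leadingCoeff]
  · exact (hroots x hx).trans (Lagrange.eval_nodal_at_node (v := id) hx).symm

theorem eval_nodal_add_of_mem {A : Type*} [CommRing A] {W : AddSubgroup A} {s : Finset A}
    (hs : ∀ x, x ∈ s ↔ x ∈ W) (x : A) {w : A} (hw : w ∈ W) :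
    (Lagrange.nodal s id).eval (x + w) = (Lagrange.nodal s id).eval x := by
  simp only [Lagrange.eval_nodal, id]
  refine Finset.prod_equiv (Equiv.subRight w) (fun u => ?_) fun u _ => ?_
  · rw [hs, hs, Equiv.subRight_apply, sub_eq_add_neg, W.add_mem_cancel_right (W.neg_mem hw)]
  · rw [Equiv.subRight_apply]; ring

theorem eval_nodal_smul {K A : Type*} [Field K] [Finite K] [CommRing A] [Algebra K A]
    {W : Submodule K A} {s : Finset A} (hs : ∀ x, x ∈ s ↔ x ∈ W) (c : K) (x : A) :
    (Lagrange.nodal s id).eval (c • x) = c • (Lagrange.nodal s id).eval x := by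
  obtain rfl | hc := eq_or_ne c 0
  · rw [zero_smul, zero_smul]
    exact Lagrange.eval_nodal_at_node (v := id) ((hs 0).mpr W.zero_mem)
  have hcard : c ^ s.card = c := by
    cases nonempty_fintype K
    let _ : Fintype W := Fintype.subtype s hs
    have : Fintype.card W = s.card := Fintype.card_of_subtype s hs
    rw [← this, Module.card_eq_pow_finrank (K := K) (V := W), FiniteField.pow_card_pow]
  calc (Lagrange.nodal s id).eval (c • x) = ∏ u ∈ s, (c • x - u) := Lagrange.eval_nodal
    _ = ∏ u ∈ s, c • (x - u) := by
      symm
      refine Finset.prod_equiv (MulAction.toPerm (Units.mk0 c hc)) (fun u => ?_) fun u _ => ?_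
      · simp [hs, Units.smul_def, W.smul_mem_iff hc]
      · simp [smul_sub, Units.smul_def]
    _ = c • (Lagrange.nodal s id).eval x := by
      rw [Finset.prod_smul, Finset.prod_const, hcard, Lagrange.eval_nodal]; rfl

theorem card_sup_span_singleton {K M : Type*} [Field K] [Fintype K] [AddCommGroup M] [Module K M]
    {W : Submodule K M} {s t : Finset M} {y : M} (hs : ∀ x, x ∈ s ↔ x ∈ W)
    (ht : ∀ x, x ∈ t ↔ x ∈ W ⊔ Submodule.span K {y}) (hy : y ∉ W) :
    t.card = s.card * Fintype.card K := by
  rw [← Finset.card_univ, ← Finset.card_product]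
  symm
  refine Finset.card_bij (fun x _ => x.1 + x.2 • y) ?_ ?_ ?_
  · simp only [Finset.mem_product, hs, ht]
    exact fun x hx => Submodule.add_mem_sup hx.1 (Submodule.mem_span_singleton.mpr ⟨x.2, rfl⟩)
  · rintro ⟨w, c⟩ hw ⟨w', c'⟩ hw' (heq : w + c • y = w' + c' • y)
    simp only [Finset.mem_product, hs, Finset.mem_univ, and_true] at hw hw'
    have hmem : (c - c') • y ∈ W := by
      have : (c - c') • y = w' - w := by rw [sub_smul, sub_eq_sub_iff_add_eq_add, add_comm, heq]
      exact this ▸ W.sub_mem hw' hw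
    obtain rfl : c = c' := by
      by_contra hne
      exact hy ((W.smul_mem_iff (sub_ne_zero.mpr hne)).mp hmem)
    rw [add_right_cancel heq]
  · intro x hx
    obtain ⟨w, hw, _, hz, rfl⟩ := Submodule.mem_sup.mp ((ht x).mp hx)
    obtain ⟨c, rfl⟩ := Submodule.mem_span_singleton.mp hz
    exact ⟨(w, c), by simpa [hs] using hw, rfl⟩

theorem nodal_sup_span_singleton {K A : Type*} [Field K] [Fintype K] [CommRing A] [IsDomain A]
    [Algebra K A] {W : Submodule K A} {s t : Finset A} {y : A} (hs : ∀ x, x ∈ s ↔ x ∈ W)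
    (ht : ∀ x, x ∈ t ↔ x ∈ W ⊔ Submodule.span K {y}) (hy : y ∉ W) :
    Lagrange.nodal t id = Lagrange.nodal s id ^ Fintype.card K -
      Polynomial.C ((Lagrange.nodal s id).eval y ^ (Fintype.card K - 1)) * Lagrange.nodal s id := by
  set g := Lagrange.nodal s id with hg
  set q := Fintype.card K
  have hq : 1 < q := Fintype.one_lt_card
  have hmonic : g.Monic := Lagrange.nodal_monic
  have hdeg : (g ^ q).natDegree = s.card * q := by
    rw [hmonic.natDegree_pow, hg, Lagrange.natDegree_nodal, mul_comm]
  have hlt : (Polynomial.C (g.eval y ^ (q - 1)) * g).natDegree < (g ^ q).natDegree := by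
    refine (Polynomial.natDegree_C_mul_le _ _).trans_lt ?_
    rw [hdeg, hg, Lagrange.natDegree_nodal]
    exact lt_mul_of_one_lt_right (Finset.card_pos.mpr ⟨0, (hs 0).mpr W.zero_mem⟩) hq
  have hmonic' := (hmonic.pow q).sub_of_left (Polynomial.degree_lt_degree hlt)
  refine (eq_nodal_of_monic hmonic' ?_ fun x hx => ?_).symm
  · rw [Polynomial.natDegree_sub_eq_left_of_natDegree_lt hlt, hdeg,
      card_sup_span_singleton hs ht hy]
  · obtain ⟨w, hw, _, hz, rfl⟩ := Submodule.mem_sup.mp ((ht x).mp hx)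
    obtain ⟨c, rfl⟩ := Submodule.mem_span_singleton.mp hz
    have heval : g.eval (w + c • y) = c • g.eval y := by
      rw [add_comm, hg, eval_nodal_add_of_mem (W := W.toAddSubgroup) hs _ hw, eval_nodal_smul hs]
    rw [Polynomial.IsRoot, Polynomial.eval_sub, Polynomial.eval_mul, Polynomial.eval_pow,
      Polynomial.eval_C, heval, smul_pow, FiniteField.pow_card, mul_smul_comm,
      pow_sub_one_mul (by omega), sub_self]

end SubspacePolynomial
section Flag

variable {p n : ℕ} [Fact p.Prime]

theorem mem_V_iff_mem_span {m : ℕ} (x : MvPolynomial (Fin n) (ZMod p)) :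
    x ∈ V p n m ↔ x ∈ Submodule.span (ZMod p) (X '' {j : Fin n | j.val < m}) := by
  simp only [V, Finset.mem_image, Finset.mem_univ, true_and, C_mul']
  constructor
  · rintro ⟨c, rfl⟩
    exact Submodule.sum_smul_mem _ _ fun j hj =>
      Submodule.subset_span (Set.mem_image_of_mem X (by simpa using hj))
  · intro hx
    have hcoe : {j : Fin n | j.val < m} = ({j : Fin n | j.val < m} : Finset (Fin n)) := by simp
    rw [hcoe, Submodule.mem_span_image_finset_iff_exists_fun] at hx
    obtain ⟨c, rfl⟩ := hx
    refine ⟨fun j => if hj : j.val < m then c ⟨j, by simpa using hj⟩ else 0, ?_⟩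
    rw [← Finset.sum_coe_sort]
    refine Finset.sum_congr rfl fun j _ => ?_
    exact congrArg (· • X j.1) (dif_pos (Finset.mem_filter.mp j.2).2)

theorem mem_V_succ_iff {m : ℕ} (hm : m < n) (x : MvPolynomial (Fin n) (ZMod p)) :
    x ∈ V p n (m + 1) ↔ x ∈ Submodule.span (ZMod p) (X '' {j : Fin n | j.val < m}) ⊔
      Submodule.span (ZMod p) {X ⟨m, hm⟩} := by
  have hset : {j : Fin n | j.val < m + 1} = insert ⟨m, hm⟩ {j : Fin n | j.val < m} := by
    ext j
    simp only [Set.mem_ofPred_eq, Set.mem_insert_iff, Fin.ext_iff]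
    omega
  rw [mem_V_iff_mem_span, hset, Set.image_insert_eq, Submodule.span_insert, sup_comm]

theorem f_zero : f p n 0 = Polynomial.X := by
  have hV : V p n 0 = {0} := by
    ext x
    simp [mem_V_iff_mem_span]
  simp [f, hV]

theorem f_succ {m : ℕ} (hm : m < n) :
    f p n (m + 1) = f p n m ^ p - Polynomial.C (hGen p n ⟨m, hm⟩) * f p n m := by
  have hX : X ⟨m, hm⟩ ∉ Submodule.span (ZMod p) (X '' {j : Fin n | j.val < m}) :=
    (algebraicIndependent_X (Fin n) (ZMod p)).linearIndependent.notMem_span_image (by simp)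
  have h := nodal_sup_span_singleton mem_V_iff_mem_span (mem_V_succ_iff hm) hX
  rwa [ZMod.card] at h

theorem isIntegral_of_isIntegral_eval_f {B : Subalgebra (ZMod p) (MvPolynomial (Fin n) (ZMod p))}
    (hB : ∀ j, hGen p n j ∈ B) {m : ℕ} (hm : m ≤ n) {x : MvPolynomial (Fin n) (ZMod p)}
    (hx : IsIntegral B ((f p n m).eval x)) : IsIntegral B x := by
  induction m with
  | zero => simpa [f_zero] using hx
  | succ m ih =>
    refine ih (by omega) ?_
    have hp : 1 < p := Fact.out (p := p.Prime) |>.one_lt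
    let c : B := ⟨hGen p n ⟨m, hm⟩, hB _⟩
    have hlt : (Polynomial.C c * Polynomial.X).natDegree < p :=
      (Polynomial.natDegree_C_mul_le c _).trans_lt (by rwa [Polynomial.natDegree_X])
    refine IsIntegral.of_aeval_monic (p := Polynomial.X ^ p - Polynomial.C c * Polynomial.X)
      (Polynomial.monic_X_pow_sub ?_) ?_ ?_
    · exact (Polynomial.degree_C_mul_X_le c).trans_lt (by exact_mod_cast hp)
    · rw [Polynomial.natDegree_sub_eq_left_of_natDegree_lt (by rwa [Polynomial.natDegree_X_pow]),
        Polynomial.natDegree_X_pow]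
      omega
    · rw [f_succ hm] at hx
      simpa [c] using hx

theorem algebraicIndependent_of_isIntegral_X {σ K : Type*} [Finite σ] [Field K]
    {h : σ → MvPolynomial σ K}
    (hX : ∀ j, IsIntegral (Algebra.adjoin K (Set.range h)) (X j : MvPolynomial σ K)) :
    AlgebraicIndependent K h := by
  have : Algebra.IsIntegral (Algebra.adjoin K (Set.range h)) (MvPolynomial σ K) := by
    refine ⟨fun x => ?_⟩
    induction x using MvPolynomial.induction_on with
    | C a => exact isIntegral_algebraMap (x := algebraMap K (Algebra.adjoin K (Set.range h)) a)
    | add x y hx hy => exact hx.add hy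
    | mul_X x j hx => exact hx.mul (hX j)
  exact (Algebra.IsAlgebraic.isTranscendenceBasis_of_lift_le_trdeg_of_finite K h
    (by simp [MvPolynomial.trdeg_of_isDomain])).1

theorem algebraicIndependent_hGen : AlgebraicIndependent (ZMod p) (hGen p n) := by
  refine algebraicIndependent_of_isIntegral_X fun j => ?_
  have hmem : ∀ i, hGen p n i ∈ Algebra.adjoin (ZMod p) (Set.range (hGen p n)) :=
    fun i => Algebra.subset_adjoin ⟨i, rfl⟩
  have hp : 0 < p - 1 := Nat.sub_pos_of_lt (Fact.out (p := p.Prime)).one_lt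
  refine isIntegral_of_isIntegral_eval_f hmem j.isLt.le (IsIntegral.of_pow hp ?_)
  exact isIntegral_algebraMap
    (x := (⟨hGen p n j, hmem j⟩ : Algebra.adjoin (ZMod p) (Set.range (hGen p n))))

end Flag
section Support

variable {σ R : Type*} [CommSemiring R]

theorem expand_mem_supported (p : ℕ) {s : Set σ} {φ : MvPolynomial σ R}
    (hφ : φ ∈ supported R s) : expand p φ ∈ supported R s := by
  rw [supported_eq_range_rename] at hφ ⊢
  obtain ⟨ψ, rfl⟩ := hφ
  exact ⟨expand p ψ, rename_expand p _ ψ⟩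

theorem support_expand_subset_support_expand {p : ℕ} (hp : p ≠ 0) {φ ψ : MvPolynomial σ R}
    (h : φ.support ⊆ ψ.support) : (expand p φ).support ⊆ (expand p ψ).support := by
  classical
  rw [support_expand φ hp, support_expand ψ hp]
  exact Finset.image_subset_image h

theorem apply_eq_zero_of_mem_support {j : σ} {φ : MvPolynomial σ R} (hφ : φ ∈ supported R {j}ᶜ)
    {e : σ →₀ ℕ} (he : e ∈ φ.support) : e j = 0 := by
  by_contra hj
  exact mem_supported.mp hφ ((mem_vars_iff_mem_support j).mpr
    ⟨e, he, Finsupp.mem_support_iff.mpr hj⟩) rfl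

theorem mem_support_X_pow_mul {j : σ} {u : ℕ} {φ : MvPolynomial σ R} {e : σ →₀ ℕ} :
    e ∈ (X j ^ u * φ).support ↔ u ≤ e j ∧ e - Finsupp.single j u ∈ φ.support := by
  simp [X_pow_eq_monomial, coeff_monomial_mul']

theorem apply_eq_of_mem_support_X_pow_mul {j : σ} {u : ℕ} {φ : MvPolynomial σ R}
    (hφ : φ ∈ supported R {j}ᶜ) {e : σ →₀ ℕ} (he : e ∈ (X j ^ u * φ).support) : e j = u := by
  obtain ⟨hle, he⟩ := mem_support_X_pow_mul.mp he
  have := apply_eq_zero_of_mem_support hφ he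
  rw [Finsupp.tsub_apply, Finsupp.single_eq_same] at this
  omega

theorem support_sum_X_pow_mul_subset {ι : Type*} [Fintype ι] {j : σ} {u : ι → ℕ}
    (hu : Function.Injective u) {φ ψ : ι → MvPolynomial σ R} (hψ : ∀ i, ψ i ∈ supported R {j}ᶜ)
    (h : ∀ i, (φ i).support ⊆ (ψ i).support) :
    (∑ i, X j ^ u i * φ i).support ⊆ (∑ i, X j ^ u i * ψ i).support := by
  classical
  intro e he
  obtain ⟨i, -, hi⟩ := Finset.mem_biUnion.mp (support_sum he)
  have hi' : e ∈ (X j ^ u i * ψ i).support :=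
    mem_support_X_pow_mul.mpr ((mem_support_X_pow_mul.mp hi).imp_right (h i ·))
  have huniq : ∀ i' ≠ i, coeff e (X j ^ u i' * ψ i') = 0 := by
    refine fun i' hne => notMem_support_iff.mp fun he' => hne (hu ?_)
    rw [← apply_eq_of_mem_support_X_pow_mul (hψ i') he',
      apply_eq_of_mem_support_X_pow_mul (hψ i) hi']
  rw [mem_support_iff, coeff_sum, Fintype.sum_eq_single i huniq]
  exact mem_support_iff.mp hi'

end Support

section GenericDickson

variable (R : Type*) [CommSemiring R] (p : ℕ)

/-- The Dickson invariant `d_{m,i}` as a polynomial in the `h`'s, the variable `X j` standing for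
`h_{j+1}`. The signs in the definition of `d` make all coefficients `0` or `1`, so that any
commutative semiring of coefficients is allowed; `expand p` plays the role of the `p`-th power. The
second index is an integer so that `d_{m,i} = 0` for `i < 0`. -/
noncomputable def genericDickson : ℕ → ℤ → MvPolynomial ℕ R
  | 0, i => if i = 0 then 1 else 0
  | m + 1, i => expand p (genericDickson m (i - 1)) + X m * genericDickson m i

theorem genericDickson_zero (i : ℤ) : genericDickson R p 0 i = if i = 0 then 1 else 0 := rfl

theorem genericDickson_succ (m : ℕ) (i : ℤ) :
    genericDickson R p (m + 1) i =
      expand p (genericDickson R p m (i - 1)) + X m * genericDickson R p m i := rfl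

theorem genericDickson_of_neg (m : ℕ) {i : ℤ} (hi : i < 0) : genericDickson R p m i = 0 := by
  induction m generalizing i with
  | zero => simp [genericDickson_zero, hi.ne]
  | succ m ih => simp [genericDickson_succ, ih hi, ih (by omega : i - 1 < 0)]

theorem expand_pow_genericDickson_succ (r m : ℕ) (i : ℤ) :
    expand (p ^ r) (genericDickson R p (m + 1) i) =
      expand (p ^ (r + 1)) (genericDickson R p m (i - 1)) +
        X m ^ p ^ r * expand (p ^ r) (genericDickson R p m i) := by
  rw [genericDickson_succ, map_add, map_mul, expand_X, pow_succ, expand_mul]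

theorem genericDickson_mem_supported {m j : ℕ} (hmj : m ≤ j) (i : ℤ) :
    genericDickson R p m i ∈ supported R {j}ᶜ := by
  induction m generalizing i with
  | zero =>
    rw [genericDickson_zero]
    split_ifs
    exacts [one_mem _, zero_mem _]
  | succ m ih =>
    have hX : (X m : MvPolynomial ℕ R) ∈ supported R {j}ᶜ :=
      Algebra.subset_adjoin ⟨m, by simp; omega, rfl⟩
    rw [genericDickson_succ]
    exact add_mem (expand_mem_supported p (ih (by omega) _)) (mul_mem hX (ih (by omega) _))

theorem genericDickson_succ_mul_expand (m : ℕ) (i l : ℤ) (r : ℕ) :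
    genericDickson R p (m + 1) i *
        expand (p ^ (r + 1)) (genericDickson R p (m + 1) (l - (r + 1 : ℕ))) =
      ∑ c, X m ^ ![0, 1, p ^ (r + 1), p ^ (r + 1) + 1] c *
        ![expand p (genericDickson R p m (i - 1) *
            expand (p ^ (r + 1)) (genericDickson R p m (l - 1 - (r + 1 : ℕ)))),
          genericDickson R p m i *
            expand (p ^ (r + 2)) (genericDickson R p m (l - (r + 2 : ℕ))),
          expand p (genericDickson R p m (i - 1) *
            expand (p ^ r) (genericDickson R p m (l - 1 - r))),
          genericDickson R p m i *
            expand (p ^ (r + 1)) (genericDickson R p m (l - (r + 1 : ℕ)))] c := by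
  have hl₀ : l - 1 - (r + 1 : ℕ) = l - (r + 1 : ℕ) - 1 := by omega
  have hl₁ : l - (r + 2 : ℕ) = l - (r + 1 : ℕ) - 1 := by omega
  have hl₂ : l - 1 - r = l - (r + 1 : ℕ) := by omega
  rw [genericDickson_succ, expand_pow_genericDickson_succ, hl₀, hl₁, hl₂]
  simp only [Fin.sum_univ_four, Matrix.cons_val, map_mul, ← expand_mul, ← pow_succ']
  ring

variable {p}

-- Separating the powers of the last variable changes the Frobenius twist `r` by one in either
-- direction, which is why all `r` are treated at once.
theorem support_genericDickson_mul_subset_self (hp : 1 < p) (m : ℕ) {s k : ℤ} (hsk : s ≤ k)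
    (r : ℕ) :
    (genericDickson R p m k * expand (p ^ r) (genericDickson R p m (s - r))).support ⊆
      (genericDickson R p m s * expand (p ^ r) (genericDickson R p m (k - r))).support := by
  induction m generalizing s k r with
  | zero =>
    obtain rfl | hr := Nat.eq_zero_or_pos r
    · simp [mul_comm]
    · have hzero : k ≠ 0 ∨ s - r ≠ 0 := by omega
      obtain h | h := hzero <;> simp [genericDickson_zero, h]
  | succ m ih =>
    obtain _ | r := r
    · simp [mul_comm]
    have hsk' : s - 1 ≤ k - 1 := by omega
    rw [genericDickson_succ_mul_expand, genericDickson_succ_mul_expand]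
    refine support_sum_X_pow_mul_subset ?_ ?_ ?_
    · have hr : 1 < p ^ (r + 1) := Nat.one_lt_pow r.succ_ne_zero hp
      exact StrictMono.injective (by simpa [strictMono_vecCons] using hr)
    · have hfree (i l : ℤ) (r : ℕ) : genericDickson R p m i *
          expand (p ^ r) (genericDickson R p m l) ∈ supported R {m}ᶜ :=
        mul_mem (genericDickson_mem_supported R p m.le_refl i)
          (expand_mem_supported _ (genericDickson_mem_supported R p m.le_refl l))
      intro c
      fin_cases c
      exacts [expand_mem_supported p (hfree _ _ _), hfree _ _ _,
        expand_mem_supported p (hfree _ _ _), hfree _ _ _]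
    · have hp₀ : p ≠ 0 := by omega
      intro c
      fin_cases c
      exacts [support_expand_subset_support_expand hp₀ (ih hsk' (r + 1)), ih hsk (r + 2),
        support_expand_subset_support_expand hp₀ (ih hsk' r), ih hsk (r + 1)]

theorem support_genericDickson_mul_subset (hp : 1 < p) {a b : ℕ} (hab : a ≤ b) {s k : ℤ}
    (hsk : s ≤ k) (r : ℕ) :
    (genericDickson R p a k * expand (p ^ r) (genericDickson R p b (s - r))).support ⊆
      (genericDickson R p a s * expand (p ^ r) (genericDickson R p b (k - r))).support := by
  induction b, hab using Nat.le_induction generalizing r with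
  | base => exact support_genericDickson_mul_subset_self R hp a hsk r
  | succ b hab ih =>
    have hexpansion (k s : ℤ) :
        genericDickson R p a k * expand (p ^ r) (genericDickson R p (b + 1) (s - r)) =
          ∑ i, X b ^ ![0, p ^ r] i *
            ![genericDickson R p a k *
                expand (p ^ (r + 1)) (genericDickson R p b (s - (r + 1 : ℕ))),
              genericDickson R p a k * expand (p ^ r) (genericDickson R p b (s - r))] i := by
      rw [expand_pow_genericDickson_succ, sub_sub, Nat.cast_succ]
      simp only [Fin.sum_univ_two, Matrix.cons_val_zero, Matrix.cons_val_one]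
      ring
    rw [hexpansion, hexpansion]
    refine support_sum_X_pow_mul_subset ?_ ?_ ?_
    · have hr : 0 < p ^ r := by positivity
      exact StrictMono.injective (by simpa [strictMono_vecCons] using hr)
    · rw [Fin.forall_fin_two]
      have ha := genericDickson_mem_supported R p hab
      have hb := genericDickson_mem_supported R p b.le_refl
      exact ⟨mul_mem (ha _) (expand_mem_supported _ (hb _)),
        mul_mem (ha _) (expand_mem_supported _ (hb _))⟩
    · exact Fin.forall_fin_two.mpr ⟨ih (r + 1), ih r⟩

variable (p)

theorem coeff_genericDickson_mul_comm {a b : ℕ} (hab : a ≤ b) (s k : ℤ) {e : ℕ →₀ ℕ}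
    (he : ∀ j, a ≤ j → j < b → e j ≠ 0) :
    coeff e (genericDickson R p a s * genericDickson R p b k) =
      coeff e (genericDickson R p a k * genericDickson R p b s) := by
  induction b, hab using Nat.le_induction generalizing e with
  | base => rw [mul_comm]
  | succ b hab ih =>
    have hreduce (s k : ℤ) : coeff e (genericDickson R p a s * genericDickson R p (b + 1) k) =
        coeff (e - Finsupp.single b 1) (genericDickson R p a s * genericDickson R p b k) := by
      have hfree : coeff e
          (genericDickson R p a s * expand p (genericDickson R p b (k - 1))) = 0 := by
        refine notMem_support_iff.mp fun hmem => he b hab b.lt_succ_self ?_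
        refine apply_eq_zero_of_mem_support (mul_mem ?_ (expand_mem_supported _ ?_)) hmem
        · exact genericDickson_mem_supported R p hab s
        · exact genericDickson_mem_supported R p b.le_refl _
      rw [genericDickson_succ, mul_add, coeff_add, hfree, zero_add, mul_left_comm, coeff_X_mul',
        if_pos (Finsupp.mem_support_iff.mpr (he b hab b.lt_succ_self))]
    rw [hreduce, hreduce]
    refine ih fun j haj hjb => ?_
    rw [Finsupp.tsub_apply, Finsupp.single_eq_of_ne hjb.ne, tsub_zero]
    exact he j haj (by omega)

end GenericDickson
section Dickson

theorem coeff_pow_expChar {A : Type*} [CommSemiring A] (p : ℕ) [ExpChar A p] (g : Polynomial A)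
    (i : ℕ) : (g ^ p).coeff i = if p ∣ i then g.coeff (i / p) ^ p else 0 := by
  have hp : 0 < p := expChar_pos A p
  rw [← Polynomial.map_frobenius_expand p, Polynomial.coeff_map, Polynomial.coeff_expand hp]
  split_ifs <;> simp [frobenius_def, hp.ne']

variable {p n : ℕ} [Fact p.Prime]

/-- Substitution of `h_1, …, h_n` for the first `n` of the variables `X 0, X 1, …`; the remaining
variables go to zero. -/
noncomputable def substHGen (p n : ℕ) [Fact p.Prime] :
    MvPolynomial ℕ (ZMod p) →ₐ[ZMod p] MvPolynomial (Fin n) (ZMod p) :=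
  (aeval (hGen p n)).comp (killCompl Fin.val_injective)

theorem substHGen_X {m : ℕ} (hm : m < n) : substHGen p n (X m) = hGen p n ⟨m, hm⟩ := by
  have h := AlgHom.congr_fun (killCompl_comp_rename (R := ZMod p) (Fin.val_injective (n := n)))
    (X ⟨m, hm⟩)
  rw [AlgHom.comp_apply, rename_X] at h
  simp [substHGen, h]

theorem coeff_f {m : ℕ} (hm : m ≤ n) (i : ℕ) :
    (f p n m).coeff (p ^ i) = (-1) ^ (m + i) * substHGen p n (genericDickson (ZMod p) p m i) := by
  have hp : p.Prime := Fact.out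
  induction m generalizing i with
  | zero =>
    obtain rfl | hi := eq_or_ne i 0
    · simp [f_zero, genericDickson_zero]
    · have hpi : 1 ≠ p ^ i := (Nat.one_lt_pow hi hp.one_lt).ne
      simp [f_zero, genericDickson_zero, Polynomial.coeff_X, hi, hpi]
  | succ m ih =>
    rw [f_succ hm, Polynomial.coeff_sub, Polynomial.coeff_C_mul, coeff_pow_expChar, ih (by omega) i,
      genericDickson_succ, map_add, map_mul, expand_zmod, map_pow, substHGen_X hm]
    obtain _ | i := i
    · have hneg : genericDickson (ZMod p) p m ((0 : ℕ) - 1) = 0 :=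
        genericDickson_of_neg _ p m (by norm_num)
      rw [pow_zero, if_neg hp.not_dvd_one, hneg, map_zero, zero_pow hp.ne_zero]
      ring
    · rw [if_pos (dvd_pow_self p i.succ_ne_zero), pow_succ, Nat.mul_div_cancel _ hp.pos,
        ih (by omega) i, mul_pow, pow_right_comm, neg_one_pow_expChar]
      push_cast
      rw [add_sub_cancel_right]
      ring

theorem d_eq_substHGen {m i : ℕ} (hi : i ≤ m) (hm : m ≤ n) :
    d p n m i = substHGen p n (genericDickson (ZMod p) p m i) := by
  have hsign : (-1 : MvPolynomial (Fin n) (ZMod p)) ^ (m - i) * (-1) ^ (m + i) = 1 := by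
    rw [← pow_add, Even.neg_one_pow ⟨m, by omega⟩]
  rw [d, coeff_f hm, ← mul_assoc, hsign, one_mul]

theorem eq_killCompl_of_aeval_eq_d_mul_d {P : MvPolynomial (Fin n) (ZMod p)} {a b i l : ℕ}
    (hi : i ≤ a) (ha : a ≤ n) (hl : l ≤ b) (hb : b ≤ n)
    (hP : aeval (hGen p n) P = d p n a i * d p n b l) :
    P = killCompl Fin.val_injective
      (genericDickson (ZMod p) p a i * genericDickson (ZMod p) p b l) := by
  refine algebraicIndependent_hGen (hP.trans ?_)
  rw [d_eq_substHGen hi ha, d_eq_substHGen hl hb, ← map_mul]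
  rfl

end Dickson

/-- every monomial (in the `h`'s) of `d_{k+q,k} d_{k+t,s}` is a monomial of
`d_{k+q,s} d_{k+t,k}`, and no monomial of the difference is divisible by
`h_{k+q+1} ⋯ h_{k+t}`. -/
theorem stmt12 (p n : ℕ) [Fact p.Prime] (s k q t : ℕ) (hs : s < k) (hq : q < t)
    (hkt : k + t ≤ n) (P Q : MvPolynomial (Fin n) (ZMod p))
    (hP : aeval (hGen p n) P = d p n (k + q) k * d p n (k + t) s)
    (hQ : aeval (hGen p n) Q = d p n (k + q) s * d p n (k + t) k) :
    P.support ⊆ Q.support ∧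
    ∀ e ∈ (Q - P).support, ∃ j : Fin n, k + q ≤ j.val ∧ j.val < k + t ∧ e j = 0 := by
  have hab : k + q ≤ k + t := by omega
  rw [eq_killCompl_of_aeval_eq_d_mul_d (by omega) (by omega) (by omega) hkt hP,
    eq_killCompl_of_aeval_eq_d_mul_d (by omega) (by omega) (by omega) hkt hQ]
  constructor
  · have h := support_genericDickson_mul_subset (ZMod p) (Fact.out (p := p.Prime)).one_lt hab
      (Int.ofNat_le.mpr hs.le) 0
    simp only [pow_zero, expand_one_apply, Nat.cast_zero, sub_zero] at h
    rw [support_killCompl, support_killCompl]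
    exact Finset.monotone_preimage (Finsupp.mapDomain_injective Fin.val_injective) h
  · intro e he
    by_contra! hne
    refine mem_support_iff.mp he ?_
    rw [coeff_sub, coeff_killCompl, coeff_killCompl, sub_eq_zero]
    refine coeff_genericDickson_mul_comm _ p hab _ _ fun j haj hjb => ?_
    exact (Finsupp.mapDomain_apply Fin.val_injective e ⟨j, by omega⟩).trans_ne (hne _ haj hjb)
end
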